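/- Let α > -1 and p = α + 2. For z ∈ 𝔻 define f_z(ω) = log(2/(1-z̄ω)) / (log(2/(1-|z|²)))^{1/p} for ω ∈ 𝔻 (using the principal branch of the logarithm). Then there is a constant C > 0 independent of z such that ‖f_z‖_{D^p_α} ≤ C for all z ∈ 𝔻. -/

import Mathlib

open MeasureTheory Metric Set Filter Topology ENNReal

noncomputable section

/-- The open unit disk in ℂ. -/
def unitDisk : Set ℂ := Metric.ball (0 : ℂ) 1

/-- The normalized Lebesgue area measure `dA = (1/π) dx dy` on ℂ. -/
def areaMeasure : Measure ℂ := (ENNReal.ofReal (Real.pi)⁻¹) • (volume : Measure ℂ)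

/-- `∫_𝔻 |f'(z)|^p (1-|z|²)^α dA(z)`, as an extended nonnegative real. -/
def dirichletLintegral (p α : ℝ) (f : ℂ → ℂ) : ℝ≥0∞ :=
  ∫⁻ z in unitDisk, ENNReal.ofReal (‖deriv f z‖ ^ p * (1 - ‖z‖ ^ 2) ^ α) ∂areaMeasure

/-- Membership in the weighted Dirichlet space `D^p_α`: analytic on 𝔻 with finite norm. -/
def MemDirichlet (p α : ℝ) (f : ℂ → ℂ) : Prop :=
  DifferentiableOn ℂ f unitDisk ∧ dirichletLintegral p α f < ⊤

/-- The norm of the weighted Dirichlet space `D^p_α`: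
`(|f(0)|^p + ∫_𝔻 |f'(z)|^p (1-|z|²)^α dA(z))^{1/p}`. -/
def dirichletNorm (p α : ℝ) (f : ℂ → ℂ) : ℝ :=
  (‖f 0‖ ^ p + (dirichletLintegral p α f).toReal) ^ (1 / p)

/-- The logarithmic test function `f_z(ω) = log(2/(1-z̄ω)) / (log(2/(1-|z|²)))^{1/p}`. -/
def testFnLog (p : ℝ) (z : ℂ) : ℂ → ℂ := fun ω =>
  Complex.log (2 / (1 - (starRingEnd ℂ) z * ω)) /
    (((Real.log (2 / (1 - ‖z‖ ^ 2))) ^ (1 / p) : ℝ) : ℂ)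

/-!
Since `f_z'(ω) = z̄ / (1 - z̄ω) · L^{-1/p}` with `L = log(2/(1-|z|²))`, the Dirichlet integral of
`f_z` is at most `L⁻¹` times the Forelli–Rudin integral `∫_𝔻 |1 - z̄ω|^{-p} (1-|ω|²)^α dA(ω)`, whose
exponent `p = α + 2` is the critical one, where it grows like `L`. After a rotation `z = |z|`, and
then `|1 - |z|ω|` dominates `max(1-|ω|, 1-|z|) + |arg ω|` up to a constant, so integrating out the
angle leaves `∫₀¹ t^α max(t, 1-|z|)^{-(α+1)} dt = 1/(α+1) + log(1/(1-|z|))`, which is `O(L)`.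
-/

section RealLintegrals

lemma setLIntegral_Ioc_ofReal {f : ℝ → ℝ} {a b : ℝ} (hab : a ≤ b)
    (hf : IntervalIntegrable f volume a b) (hf0 : ∀ x ∈ Ioc a b, 0 ≤ f x) :
    ∫⁻ x in Ioc a b, ENNReal.ofReal (f x) = ENNReal.ofReal (∫ x in a..b, f x) := by
  rw [intervalIntegral.integral_of_le hab, ofReal_integral_eq_lintegral_ofReal hf.1]
  filter_upwards [ae_restrict_mem measurableSet_Ioc] with x hx using hf0 x hx

lemma setLIntegral_Ioo_comp_one_sub (f : ℝ → ℝ≥0∞) :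
    ∫⁻ r in Ioo (0 : ℝ) 1, f (1 - r) = ∫⁻ t in Ioo (0 : ℝ) 1, f t := by
  simpa using (volume.measurePreserving_sub_left (1 : ℝ)).setLIntegral_comp_preimage_emb
    (MeasurableEquiv.subLeft (1 : ℝ)).measurableEmbedding f (Ioo 0 1)

lemma integral_add_abs_rpow_neg {s b : ℝ} (hs : 1 < s) (hb : 0 < b) :
    ∫ θ : ℝ, (b + |θ|) ^ (-s) = 2 * (b ^ (1 - s) / (s - 1)) := by
  have hshift : ∫ θ in Ioi (0 : ℝ), (b + θ) ^ (-s) = ∫ t in Ioi b, t ^ (-s) := by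
    simpa using (measurePreserving_add_left volume b).setIntegral_preimage_emb
      (measurableEmbedding_addLeft b) (fun t : ℝ => t ^ (-s)) (Ioi b)
  rw [integral_comp_abs (f := fun t => (b + t) ^ (-s)), hshift,
    integral_Ioi_rpow_of_lt (by linarith) hb, ← neg_div_neg_eq, neg_neg]
  ring_nf

lemma lintegral_add_abs_rpow_neg {s b : ℝ} (hs : 1 < s) (hb : 0 < b) :
    ∫⁻ θ : ℝ, ENNReal.ofReal ((b + |θ|) ^ (-s)) =
      ENNReal.ofReal (2 * (b ^ (1 - s) / (s - 1))) := by
  have hpos : 0 < 2 * (b ^ (1 - s) / (s - 1)) := by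
    have : 0 < s - 1 := by linarith
    positivity
  rw [← integral_add_abs_rpow_neg hs hb] at hpos ⊢
  -- Integrability comes for free: a nonintegrable function would have Bochner integral zero.
  exact (ofReal_integral_eq_lintegral_ofReal (.of_integral_ne_zero hpos.ne')
    (.of_forall fun θ => by positivity)).symm

lemma lintegral_rpow_mul_max_rpow_le {α δ : ℝ} (hα : -1 < α) (hδ0 : 0 < δ) (hδ1 : δ ≤ 1) :
    ∫⁻ t in Ioo (0 : ℝ) 1, ENNReal.ofReal (t ^ α * max t δ ^ (-(α + 1))) ≤
      ENNReal.ofReal (1 / (α + 1) + Real.log δ⁻¹) := by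
  have hα1 : 0 < α + 1 := by linarith
  have hnear : ∫⁻ t in Ioc 0 δ, ENNReal.ofReal (t ^ α * max t δ ^ (-(α + 1))) =
      ENNReal.ofReal (1 / (α + 1)) := by
    calc _ = ∫⁻ t in Ioc 0 δ, ENNReal.ofReal (t ^ α * δ ^ (-(α + 1))) :=
          setLIntegral_congr_fun measurableSet_Ioc fun t ht => by simp only [max_eq_right ht.2]
      _ = ENNReal.ofReal (∫ t in (0 : ℝ)..δ, t ^ α * δ ^ (-(α + 1))) :=
          setLIntegral_Ioc_ofReal hδ0.le
            ((intervalIntegral.intervalIntegrable_rpow' hα).mul_const _)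
            fun t ht => by have := ht.1; positivity
      _ = ENNReal.ofReal (1 / (α + 1)) := by
          rw [intervalIntegral.integral_mul_const, integral_rpow (.inl hα),
            Real.zero_rpow hα1.ne', sub_zero, div_mul_eq_mul_div, ← Real.rpow_add hδ0,
            add_neg_cancel, Real.rpow_zero]
  have hfar : ∫⁻ t in Ioc δ 1, ENNReal.ofReal (t ^ α * max t δ ^ (-(α + 1))) =
      ENNReal.ofReal (Real.log δ⁻¹) := by
    calc _ = ∫⁻ t in Ioc δ 1, ENNReal.ofReal t⁻¹ :=
          setLIntegral_congr_fun measurableSet_Ioc fun t ht => by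
            simp only [max_eq_left ht.1.le]
            rw [← Real.rpow_add (hδ0.trans ht.1), ← Real.rpow_neg_one]
            ring_nf
      _ = ENNReal.ofReal (∫ t in δ..1, t⁻¹) :=
          setLIntegral_Ioc_ofReal hδ1
            (intervalIntegrable_inv_iff.2 (.inr (notMem_uIcc_of_lt hδ0 one_pos)))
            fun t ht => inv_nonneg.2 (hδ0.trans ht.1).le
      _ = ENNReal.ofReal (Real.log δ⁻¹) := by
          rw [integral_inv_of_pos hδ0 one_pos, one_div]
  rw [ENNReal.ofReal_add (by positivity) (Real.log_nonneg ((one_le_inv₀ hδ0).2 hδ1)),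
    ← hnear, ← hfar]
  refine (lintegral_mono_set ?_).trans (lintegral_union_le _ _ _)
  rw [Ioc_union_Ioc_eq_Ioc hδ0.le hδ1]
  exact Ioo_subset_Ioc_self

end RealLintegrals

section UnitDisk

lemma mem_unitDisk {z : ℂ} : z ∈ unitDisk ↔ ‖z‖ < 1 := mem_ball_zero_iff

lemma measurableSet_unitDisk : MeasurableSet unitDisk := measurableSet_ball

lemma one_sub_norm_sq_pos {z : ℂ} (hz : z ∈ unitDisk) : 0 < 1 - ‖z‖ ^ 2 := by
  have := pow_lt_one₀ (norm_nonneg z) (mem_unitDisk.1 hz) two_ne_zero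
  linarith

lemma conj_mul_mem_unitDisk {z ω : ℂ} (hz : z ∈ unitDisk) (hω : ω ∈ unitDisk) :
    (starRingEnd ℂ) z * ω ∈ unitDisk := by
  rw [mem_unitDisk] at *
  rw [norm_mul, RCLike.norm_conj]
  exact mul_lt_one_of_nonneg_of_lt_one_left (norm_nonneg z) hz hω.le

lemma areaMeasure_le_volume : areaMeasure ≤ (volume : Measure ℂ) := by
  refine Measure.le_iff.2 fun s _ => ?_
  have hπ : ENNReal.ofReal Real.pi⁻¹ ≤ 1 :=
    ENNReal.ofReal_le_one.2 (inv_le_one_of_one_le₀ (by linarith [Real.pi_gt_three]))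
  exact mul_le_of_le_one_left' hπ

lemma setLIntegral_unitDisk_comp_circle_mul (u : Circle) (F : ℂ → ℝ≥0∞) :
    ∫⁻ ω in unitDisk, F (u * ω) = ∫⁻ ω in unitDisk, F ω := by
  have hpre : rotation u ⁻¹' unitDisk = unitDisk := by
    ext ω
    simp [mem_unitDisk, Circle.norm_coe]
  simpa [hpre] using (rotation u).measurePreserving.setLIntegral_comp_preimage_emb
    (rotation u).toHomeomorph.measurableEmbedding F unitDisk

lemma setLIntegral_unitDisk_norm_arg_le (F : ℝ → ℝ → ℝ≥0∞) :
    ∫⁻ ω in unitDisk, F ‖ω‖ ω.arg ≤ ∫⁻ r in Ioo (0 : ℝ) 1, ∫⁻ θ, F r θ := by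
  set G : ℝ × ℝ → ℝ≥0∞ := fun q => (Ioo (0 : ℝ) 1).indicator (fun r => F r q.2) q.1 with hG
  calc ∫⁻ ω in unitDisk, F ‖ω‖ ω.arg
      = ∫⁻ q in polarCoord.target, ENNReal.ofReal q.1 •
          unitDisk.indicator (fun ω => F ‖ω‖ ω.arg) (Complex.polarCoord.symm q) := by
        rw [Complex.lintegral_comp_polarCoord_symm, lintegral_indicator measurableSet_unitDisk]
    _ ≤ ∫⁻ q in polarCoord.target, G q := by
        refine setLIntegral_mono' polarCoord.open_target.measurableSet fun q hq => ?_
        have hinv : (‖Complex.polarCoord.symm q‖, (Complex.polarCoord.symm q).arg) = q := by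
          rw [← Complex.polarCoord_apply]
          exact Complex.polarCoord.right_inv hq
        obtain ⟨hnorm, harg⟩ := Prod.ext_iff.1 hinv
        by_cases hq1 : q.1 < 1
        · have hmem : Complex.polarCoord.symm q ∈ unitDisk := mem_unitDisk.2 (hnorm.trans_lt hq1)
          rw [indicator_of_mem hmem, hG]
          dsimp only at hnorm harg ⊢
          rw [indicator_of_mem (show q.1 ∈ Ioo (0 : ℝ) 1 from ⟨hq.1, hq1⟩), hnorm, harg]
          exact mul_le_of_le_one_left' (ENNReal.ofReal_le_one.2 hq1.le)
        · have hmem : Complex.polarCoord.symm q ∉ unitDisk :=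
            fun h => hq1 (hnorm.symm.trans_lt (mem_unitDisk.1 h))
          rw [indicator_of_notMem hmem, smul_zero]
          exact zero_le
    _ ≤ ∫⁻ q, G q := setLIntegral_le_lintegral _ _
    _ ≤ ∫⁻ r, ∫⁻ θ, G (r, θ) := lintegral_prod_le G
    _ = ∫⁻ r in Ioo (0 : ℝ) 1, ∫⁻ θ, F r θ := by
        rw [← lintegral_indicator measurableSet_Ioo]
        refine lintegral_congr fun r => ?_
        by_cases hr : r ∈ Ioo (0 : ℝ) 1 <;> simp [hG, hr]

end UnitDisk

section LogWeight

/-- The quantity `log(2/(1-|z|²))` whose `1/p`-th power normalizes the logarithmic test function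
`testFnLog p z`. -/
def logWeight (z : ℂ) : ℝ := Real.log (2 / (1 - ‖z‖ ^ 2))

variable {z : ℂ}

lemma log_two_le_logWeight (hz : z ∈ unitDisk) : Real.log 2 ≤ logWeight z := by
  have hsq := one_sub_norm_sq_pos hz
  refine Real.log_le_log two_pos ((le_div_iff₀ hsq).2 ?_)
  nlinarith [sq_nonneg ‖z‖]

lemma logWeight_pos (hz : z ∈ unitDisk) : 0 < logWeight z :=
  (Real.log_pos one_lt_two).trans_le (log_two_le_logWeight hz)

lemma log_inv_one_sub_norm_le_logWeight (hz : z ∈ unitDisk) :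
    Real.log (1 - ‖z‖)⁻¹ ≤ logWeight z := by
  have hsq := one_sub_norm_sq_pos hz
  have h1 : 0 < 1 - ‖z‖ := sub_pos.2 (mem_unitDisk.1 hz)
  refine Real.log_le_log (inv_pos.2 h1) ?_
  rw [inv_eq_one_div, div_le_div_iff₀ h1 hsq]
  nlinarith [norm_nonneg z]

end LogWeight

section ForelliRudin

lemma abs_arg_le_pi_mul_norm_one_sub (z : ℂ) : |z.arg| ≤ Real.pi * ‖1 - z‖ := by
  rcases eq_or_ne z 0 with rfl | hz
  · simpa using Real.pi_pos.le
  have hz0 : 0 < ‖z‖ := norm_pos_iff.2 hz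
  have hradial : ‖z - ‖z‖⁻¹ • z‖ ≤ ‖1 - z‖ := by
    have hdiff : z - ‖z‖⁻¹ • z = (‖z‖ - 1) • (‖z‖⁻¹ • z) := by
      rw [sub_smul, smul_inv_smul₀ hz0.ne', one_smul]
    calc ‖z - ‖z‖⁻¹ • z‖ = |‖z‖ - 1| := by
          have hunit : ‖‖z‖⁻¹ • z‖ = 1 := norm_smul_inv_norm hz
          rw [hdiff, norm_smul, hunit, mul_one, Real.norm_eq_abs]
      _ ≤ ‖1 - z‖ := by simpa [norm_sub_rev] using abs_norm_sub_norm_le z 1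
  calc |z.arg| = InnerProductGeometry.angle 1 (‖z‖⁻¹ • z) := by
        rw [InnerProductGeometry.angle_smul_right_of_pos _ _ (inv_pos.2 hz0),
          Complex.angle_one_left hz]
    _ ≤ Real.pi / 2 * ‖1 - ‖z‖⁻¹ • z‖ :=
        Complex.angle_le_mul_norm_sub norm_one (norm_smul_inv_norm hz)
    _ ≤ Real.pi / 2 * (‖1 - z‖ + ‖1 - z‖) := by
        gcongr
        exact (norm_sub_le_norm_sub_add_norm_sub _ z _).trans (by gcongr)
    _ = Real.pi * ‖1 - z‖ := by ring

lemma max_add_abs_arg_le_mul_norm_one_sub {a : ℝ} (ha0 : 0 ≤ a) (ha1 : a ≤ 1) {ω : ℂ}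
    (hω : ‖ω‖ ≤ 1) :
    max (1 - ‖ω‖) (1 - a) + |ω.arg| ≤ (1 + Real.pi) * ‖1 - a * ω‖ := by
  have hnorm : ‖(a : ℂ) * ω‖ = a * ‖ω‖ := by rw [norm_mul, Complex.norm_of_nonneg ha0]
  have hmax : max (1 - ‖ω‖) (1 - a) ≤ ‖1 - a * ω‖ := by
    have htri : 1 - a * ‖ω‖ ≤ ‖1 - a * ω‖ := by
      rw [← hnorm, ← norm_one (α := ℂ)]
      exact norm_sub_norm_le 1 _
    refine (max_le ?_ ?_).trans htri <;> nlinarith [norm_nonneg ω]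
  have harg : |ω.arg| ≤ Real.pi * ‖1 - a * ω‖ := by
    rcases ha0.eq_or_lt with rfl | ha
    · simpa using Complex.abs_arg_le_pi ω
    · simpa [Complex.arg_real_mul ω ha] using abs_arg_le_pi_mul_norm_one_sub (a * ω)
  linarith

lemma one_sub_sq_rpow_le (α : ℝ) {r : ℝ} (hr0 : 0 ≤ r) (hr1 : r ≤ 1) :
    (1 - r ^ 2) ^ α ≤ 2 ^ |α| * (1 - r) ^ α := by
  rw [show 1 - r ^ 2 = (1 + r) * (1 - r) by ring,
    Real.mul_rpow (by linarith) (by linarith)]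
  have : 0 ≤ (1 - r) ^ α := Real.rpow_nonneg (by linarith) _
  gcongr
  calc (1 + r) ^ α ≤ (1 + r) ^ |α| :=
        Real.rpow_le_rpow_of_exponent_le (by linarith) (le_abs_self α)
    _ ≤ 2 ^ |α| := by gcongr; linarith

lemma norm_one_sub_rpow_neg_mul_le {s : ℝ} (hs : 0 ≤ s) (α : ℝ) {a : ℝ} (ha0 : 0 ≤ a)
    (ha1 : a < 1) {ω : ℂ} (hω : ω ∈ unitDisk) :
    ‖1 - a * ω‖ ^ (-s) * (1 - ‖ω‖ ^ 2) ^ α ≤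
      (1 + Real.pi) ^ s * 2 ^ |α| * (1 - ‖ω‖) ^ α *
        (max (1 - ‖ω‖) (1 - a) + |ω.arg|) ^ (-s) := by
  rw [mem_unitDisk] at hω
  have hbase : 0 < max (1 - ‖ω‖) (1 - a) + |ω.arg| := by
    have := (sub_pos.2 ha1).trans_le (le_max_right (1 - ‖ω‖) (1 - a))
    positivity
  have hkernel : ‖1 - a * ω‖ ^ (-s) ≤
      (1 + Real.pi) ^ s * (max (1 - ‖ω‖) (1 - a) + |ω.arg|) ^ (-s) := by
    have hle := (div_le_iff₀' (by positivity)).2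
      (max_add_abs_arg_le_mul_norm_one_sub ha0 ha1.le hω.le)
    calc ‖1 - a * ω‖ ^ (-s)
        ≤ ((max (1 - ‖ω‖) (1 - a) + |ω.arg|) / (1 + Real.pi)) ^ (-s) :=
          Real.rpow_le_rpow_of_nonpos (by positivity) hle (neg_nonpos.2 hs)
      _ = (1 + Real.pi) ^ s * (max (1 - ‖ω‖) (1 - a) + |ω.arg|) ^ (-s) := by
          rw [Real.div_rpow hbase.le (by positivity),
            Real.rpow_neg (show 0 ≤ 1 + Real.pi by positivity), div_inv_eq_mul, mul_comm]
  have hweight := one_sub_sq_rpow_le α (norm_nonneg ω) hω.le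
  calc ‖1 - a * ω‖ ^ (-s) * (1 - ‖ω‖ ^ 2) ^ α
      ≤ ((1 + Real.pi) ^ s * (max (1 - ‖ω‖) (1 - a) + |ω.arg|) ^ (-s)) *
          (2 ^ |α| * (1 - ‖ω‖) ^ α) :=
        mul_le_mul hkernel hweight
          (Real.rpow_nonneg (one_sub_norm_sq_pos (mem_unitDisk.2 hω)).le _) (by positivity)
    _ = _ := by ring

/-- The Forelli–Rudin integral `∫_𝔻 |1 - z̄ω|^{-s} (1-|ω|²)^α dA(ω)`, as an extended nonnegative
real. It controls the Dirichlet integrals of the logarithmic test functions. -/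
def forelliRudinIntegral (s α : ℝ) (z : ℂ) : ℝ≥0∞ :=
  ∫⁻ ω in unitDisk,
    ENNReal.ofReal (‖1 - (starRingEnd ℂ) z * ω‖ ^ (-s) * (1 - ‖ω‖ ^ 2) ^ α) ∂areaMeasure

lemma exists_circle_conj_mul_eq_norm (z : ℂ) :
    ∃ u : Circle, (starRingEnd ℂ) z * u = (‖z‖ : ℂ) := by
  refine ⟨Circle.exp z.arg, ?_⟩
  set u := Circle.exp z.arg
  have hz : z = ‖z‖ * u := by rw [Circle.coe_exp, Complex.norm_mul_exp_arg_mul_I]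
  calc (starRingEnd ℂ) z * u = (starRingEnd ℂ) (‖z‖ * u) * u := by rw [← hz]
    _ = ‖z‖ * (u * (starRingEnd ℂ) u) := by rw [map_mul, Complex.conj_ofReal]; ring
    _ = ‖z‖ := by rw [Complex.mul_conj, Circle.normSq_coe, Complex.ofReal_one, mul_one]

lemma forelliRudinIntegral_le_setLIntegral_norm (s α : ℝ) (z : ℂ) :
    forelliRudinIntegral s α z ≤
      ∫⁻ ω in unitDisk, ENNReal.ofReal (‖1 - (‖z‖ : ℂ) * ω‖ ^ (-s) * (1 - ‖ω‖ ^ 2) ^ α) := by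
  obtain ⟨u, hu⟩ := exists_circle_conj_mul_eq_norm z
  refine (lintegral_mono' (Measure.restrict_mono_measure areaMeasure_le_volume _)
    le_rfl).trans_eq ?_
  rw [← setLIntegral_unitDisk_comp_circle_mul u]
  simp only [← mul_assoc, hu, norm_mul, Circle.norm_coe, one_mul]

lemma forelliRudinIntegral_le_radial {s : ℝ} (hs : 1 < s) (α : ℝ) {z : ℂ} (hz : z ∈ unitDisk) :
    forelliRudinIntegral s α z ≤
      ENNReal.ofReal ((1 + Real.pi) ^ s * 2 ^ |α| * (2 / (s - 1))) *
        ∫⁻ t in Ioo (0 : ℝ) 1, ENNReal.ofReal (t ^ α * max t (1 - ‖z‖) ^ (1 - s)) := by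
  rw [mem_unitDisk] at hz
  have : 0 < s - 1 := by linarith
  set K : ℝ := (1 + Real.pi) ^ s * 2 ^ |α|
  have : 0 < K := by positivity
  calc forelliRudinIntegral s α z
      ≤ ∫⁻ ω in unitDisk, ENNReal.ofReal (K * (1 - ‖ω‖) ^ α *
          (max (1 - ‖ω‖) (1 - ‖z‖) + |ω.arg|) ^ (-s)) :=
        (forelliRudinIntegral_le_setLIntegral_norm s α z).trans <|
          setLIntegral_mono' measurableSet_unitDisk fun ω hω => ENNReal.ofReal_le_ofReal <|
            norm_one_sub_rpow_neg_mul_le (by linarith) α (norm_nonneg z) hz hω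
    _ ≤ ∫⁻ r in Ioo (0 : ℝ) 1, ∫⁻ θ : ℝ, ENNReal.ofReal (K * (1 - r) ^ α *
          (max (1 - r) (1 - ‖z‖) + |θ|) ^ (-s)) :=
        setLIntegral_unitDisk_norm_arg_le fun r θ => ENNReal.ofReal (K * (1 - r) ^ α *
          (max (1 - r) (1 - ‖z‖) + |θ|) ^ (-s))
    _ = ∫⁻ t in Ioo (0 : ℝ) 1, ∫⁻ θ : ℝ, ENNReal.ofReal (K * t ^ α *
          (max t (1 - ‖z‖) + |θ|) ^ (-s)) :=
        setLIntegral_Ioo_comp_one_sub fun t => ∫⁻ θ : ℝ, ENNReal.ofReal (K * t ^ α *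
          (max t (1 - ‖z‖) + |θ|) ^ (-s))
    _ = ∫⁻ t in Ioo (0 : ℝ) 1, ENNReal.ofReal (K * (2 / (s - 1))) *
          ENNReal.ofReal (t ^ α * max t (1 - ‖z‖) ^ (1 - s)) := by
        refine setLIntegral_congr_fun measurableSet_Ioo fun t ht => ?_
        have ht0 : 0 < t := ht.1
        simp only [ENNReal.ofReal_mul (show 0 ≤ K * t ^ α by positivity)]
        rw [lintegral_const_mul' _ _ ENNReal.ofReal_ne_top,
          lintegral_add_abs_rpow_neg hs (lt_max_of_lt_left ht0),
          ← ENNReal.ofReal_mul (by positivity), ← ENNReal.ofReal_mul (by positivity)]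
        ring_nf
    _ = _ := lintegral_const_mul' _ _ ENNReal.ofReal_ne_top

lemma exists_forelliRudinIntegral_le_logWeight {α : ℝ} (hα : -1 < α) :
    ∃ M : ℝ, 0 < M ∧ ∀ z ∈ unitDisk,
      forelliRudinIntegral (α + 2) α z ≤ ENNReal.ofReal (M * logWeight z) := by
  have hα1 : 0 < α + 1 := by linarith
  have hlog2 : 0 < Real.log 2 := Real.log_pos one_lt_two
  set K : ℝ := (1 + Real.pi) ^ (α + 2) * 2 ^ |α| * (2 / (α + 2 - 1)) with hK
  have hK0 : 0 < K := by rw [hK, show α + 2 - 1 = α + 1 by ring]; positivity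
  refine ⟨K * (1 / (α + 1) / Real.log 2 + 1), by positivity, fun z hz => ?_⟩
  have hradial : ∫⁻ t in Ioo (0 : ℝ) 1,
      ENNReal.ofReal (t ^ α * max t (1 - ‖z‖) ^ (1 - (α + 2))) ≤
        ENNReal.ofReal (1 / (α + 1) + Real.log (1 - ‖z‖)⁻¹) := by
    rw [show 1 - (α + 2) = -(α + 1) by ring]
    exact lintegral_rpow_mul_max_rpow_le hα (sub_pos.2 (mem_unitDisk.1 hz))
      (sub_le_self _ (norm_nonneg z))
  have hconst : 1 / (α + 1) ≤ 1 / (α + 1) / Real.log 2 * logWeight z := by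
    rw [div_mul_eq_mul_div, le_div_iff₀ hlog2]
    gcongr
    exact log_two_le_logWeight hz
  calc forelliRudinIntegral (α + 2) α z
      ≤ ENNReal.ofReal K * ENNReal.ofReal (1 / (α + 1) + Real.log (1 - ‖z‖)⁻¹) :=
        (forelliRudinIntegral_le_radial (by linarith) α hz).trans (by gcongr)
    _ = ENNReal.ofReal (K * (1 / (α + 1) + Real.log (1 - ‖z‖)⁻¹)) :=
        (ENNReal.ofReal_mul hK0.le).symm
    _ ≤ ENNReal.ofReal (K * (1 / (α + 1) / Real.log 2 + 1) * logWeight z) := by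
        rw [mul_assoc K, add_one_mul]
        gcongr
        exact log_inv_one_sub_norm_le_logWeight hz

end ForelliRudin

section TestFunction

variable {p : ℝ} {z ω : ℂ}

lemma hasDerivAt_log_two_div_one_sub_mul {c : ℂ} (hcω : ‖c * ω‖ < 1) :
    HasDerivAt (fun ω => Complex.log (2 / (1 - c * ω))) (c / (1 - c * ω)) ω := by
  have hre : 0 < (1 - c * ω).re := by
    have := Complex.re_le_norm (c * ω)
    rw [Complex.sub_re, Complex.one_re]
    linarith
  have hne : 1 - c * ω ≠ 0 := by
    intro h
    simp [h] at hre
  have hslit : 2 / (1 - c * ω) ∈ Complex.slitPlane := by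
    have := Complex.normSq_pos.2 hne
    left
    rw [div_eq_mul_inv, ← Complex.ofReal_ofNat, Complex.re_ofReal_mul, Complex.inv_re]
    positivity
  have hlin : HasDerivAt (fun ω => 1 - c * ω) (-c) ω := by
    simpa using ((hasDerivAt_id ω).const_mul c).const_sub 1
  refine (((hasDerivAt_const ω (2 : ℂ)).div hlin hne).clog hslit).congr_deriv ?_
  simp only [Pi.div_apply]
  field_simp
  ring

lemma hasDerivAt_testFnLog (p : ℝ) (hz : z ∈ unitDisk) (hω : ω ∈ unitDisk) :
    HasDerivAt (testFnLog p z) ((starRingEnd ℂ) z / (1 - (starRingEnd ℂ) z * ω) /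
      ((logWeight z ^ (1 / p) : ℝ) : ℂ)) ω :=
  (hasDerivAt_log_two_div_one_sub_mul (mem_unitDisk.1 (conj_mul_mem_unitDisk hz hω))).div_const _

lemma norm_div_ofReal_rpow_one_div_rpow (hp : p ≠ 0) {L : ℝ} (hL : 0 ≤ L) (x : ℂ) :
    ‖x / ((L ^ (1 / p) : ℝ) : ℂ)‖ ^ p = ‖x‖ ^ p / L := by
  rw [norm_div, Complex.norm_of_nonneg (by positivity),
    Real.div_rpow (norm_nonneg x) (by positivity), one_div, Real.rpow_inv_rpow hL hp]

lemma norm_testFnLog_zero_rpow (hp : p ≠ 0) (hz : z ∈ unitDisk) :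
    ‖testFnLog p z 0‖ ^ p = Real.log 2 ^ p / logWeight z := by
  have hlog : Complex.log (2 / (1 - (starRingEnd ℂ) z * 0)) = (Real.log 2 : ℝ) := by simp
  rw [testFnLog, ← logWeight, norm_div_ofReal_rpow_one_div_rpow hp (logWeight_pos hz).le, hlog,
    Complex.norm_of_nonneg (Real.log_nonneg one_le_two)]

lemma norm_deriv_testFnLog_rpow_le (hp : 0 < p) (hz : z ∈ unitDisk) (hω : ω ∈ unitDisk) :
    ‖deriv (testFnLog p z) ω‖ ^ p ≤
      (logWeight z)⁻¹ * ‖1 - (starRingEnd ℂ) z * ω‖ ^ (-p) := by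
  have hL := logWeight_pos hz
  calc ‖deriv (testFnLog p z) ω‖ ^ p
      = ‖z‖ ^ p * ((logWeight z)⁻¹ * ‖1 - (starRingEnd ℂ) z * ω‖ ^ (-p)) := by
        rw [(hasDerivAt_testFnLog p hz hω).deriv, norm_div_ofReal_rpow_one_div_rpow hp.ne' hL.le,
          norm_div, RCLike.norm_conj, Real.div_rpow (norm_nonneg _) (norm_nonneg _),
          Real.rpow_neg (norm_nonneg _)]
        ring
    _ ≤ (logWeight z)⁻¹ * ‖1 - (starRingEnd ℂ) z * ω‖ ^ (-p) :=
        mul_le_of_le_one_left (by positivity)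
          (Real.rpow_le_one (norm_nonneg z) (mem_unitDisk.1 hz).le hp.le)

lemma dirichletLintegral_testFnLog_le (hp : 0 < p) (α : ℝ) (hz : z ∈ unitDisk) :
    dirichletLintegral p α (testFnLog p z) ≤
      ENNReal.ofReal (logWeight z)⁻¹ * forelliRudinIntegral p α z := by
  have hL := logWeight_pos hz
  rw [forelliRudinIntegral, ← lintegral_const_mul' _ _ ENNReal.ofReal_ne_top]
  refine setLIntegral_mono' measurableSet_unitDisk fun ω hω => ?_
  have hweight : 0 ≤ (1 - ‖ω‖ ^ 2) ^ α := Real.rpow_nonneg (one_sub_norm_sq_pos hω).le _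
  rw [← ENNReal.ofReal_mul (by positivity), ← mul_assoc]
  gcongr
  exact norm_deriv_testFnLog_rpow_le hp hz hω

lemma dirichletLintegral_testFnLog_le_of_forelliRudinIntegral_le (hp : 0 < p) {α M : ℝ}
    (hz : z ∈ unitDisk) (hM : forelliRudinIntegral p α z ≤ ENNReal.ofReal (M * logWeight z)) :
    dirichletLintegral p α (testFnLog p z) ≤ ENNReal.ofReal M := by
  have hL := logWeight_pos hz
  calc dirichletLintegral p α (testFnLog p z)
      ≤ ENNReal.ofReal (logWeight z)⁻¹ * ENNReal.ofReal (M * logWeight z) :=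
        (dirichletLintegral_testFnLog_le hp α hz).trans (by gcongr)
    _ = ENNReal.ofReal M := by
        rw [← ENNReal.ofReal_mul (by positivity), mul_comm, mul_inv_cancel_right₀ hL.ne']

end TestFunction

/-- For `p = α + 2` the logarithmic test functions have uniformly bounded `D^p_α` norm. -/
theorem testFnLog_dirichlet_bounded (p α : ℝ) (hα : -1 < α) (hpα : p = α + 2) :
    ∃ C : ℝ, 0 < C ∧ ∀ z ∈ unitDisk,
      MemDirichlet p α (testFnLog p z) ∧ dirichletNorm p α (testFnLog p z) ≤ C := by
  obtain ⟨M, hM0, hM⟩ := exists_forelliRudinIntegral_le_logWeight hα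
  rw [← hpα] at hM
  have hp : 0 < p := by linarith
  have : 0 < Real.log 2 := Real.log_pos one_lt_two
  refine ⟨(Real.log 2 ^ p / Real.log 2 + M) ^ (1 / p), by positivity, fun z hz => ?_⟩
  have hint : dirichletLintegral p α (testFnLog p z) ≤ ENNReal.ofReal M :=
    dirichletLintegral_testFnLog_le_of_forelliRudinIntegral_le hp hz (hM z hz)
  refine ⟨⟨fun ω hω => (hasDerivAt_testFnLog p hz hω).differentiableAt.differentiableWithinAt,
    hint.trans_lt ENNReal.ofReal_lt_top⟩, ?_⟩
  have hzero : ‖testFnLog p z 0‖ ^ p ≤ Real.log 2 ^ p / Real.log 2 := by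
    rw [norm_testFnLog_zero_rpow hp.ne' hz]
    gcongr
    exact log_two_le_logWeight hz
  have hderiv : (dirichletLintegral p α (testFnLog p z)).toReal ≤ M :=
    ENNReal.toReal_le_of_le_ofReal hM0.le hint
  rw [dirichletNorm]
  gcongr
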